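/- Let χ be the unique nontrivial Dirichlet character modulo 3 (so χ(n) = 1 if n ≡ 1 (mod 3), χ(n) = −1 if n ≡ 2 (mod 3), and χ(n) = 0 if 3 | n), and let L(s, χ) denote its Dirichlet L-function. Then L(0, χ) ≠ 0 and L′(0, χ)/L(0, χ) = log(2π/3) + γ − L′(1, χ)/L(1, χ), where γ is the Euler–Mascheroni constant and L′ denotes the derivative of L(s, χ) with respect to s. -/

import Mathlib

open DirichletCharacter Real

/-!
For an odd primitive character `χ` modulo `N` the completed `L`-function is
`Λ(s, χ) = Γ_ℝ(s + 1) L(s, χ)`, and `Λ(1 - s, χ)` is `N ^ s Λ(s, χ⁻¹)` up to a constant. The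
functional equation carries the nonvanishing of `L(1, χ⁻¹)` to `L(0, χ)`, and its logarithmic
derivative expresses `L'/L(0, χ) + L'/L(1, χ⁻¹)` through `Γ_ℝ'/Γ_ℝ` at `1` and `2`. The duplication
formula `Γ_ℝ(s) Γ_ℝ(s + 1) = Γ_ℂ(s)` reduces the sum of these two values to `Γ'(1) = -γ`.
-/

open Complex (Gammaℝ Gammaℂ digamma)

section Characters

variable {R : Type*}

lemma isPrimitive_of_prime_of_ne_one [CommMonoidWithZero R] {p : ℕ} [Fact p.Prime]
    {χ : DirichletCharacter R p} (hχ : χ ≠ 1) : χ.IsPrimitive :=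
  ((Fact.out : p.Prime).eq_one_or_self_of_dvd _ χ.conductor_dvd_level).resolve_left fun h ↦
    hχ (eq_one_iff_conductor_eq_one.mpr h)

lemma isPrimitive_inv [CommMonoidWithZero R] {N : ℕ} {χ : DirichletCharacter R N}
    (hχ : χ.IsPrimitive) : χ⁻¹.IsPrimitive :=
  (conductor_inv χ).trans hχ

lemma ne_one_of_odd [CommRing R] [NeZero (2 : R)] {N : ℕ} {χ : DirichletCharacter R N}
    (hχ : χ.Odd) : χ ≠ 1 := by
  rintro rfl
  exact hχ.not_even _ (MulChar.one_apply isUnit_one.neg)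

lemma odd_inv [CommRing R] {N : ℕ} {χ : DirichletCharacter R N} (hχ : χ.Odd) : χ⁻¹.Odd := by
  rw [DirichletCharacter.Odd, MulChar.inv_apply, ← Units.coe_neg_one, Ring.inverse_unit,
    inv_neg_one, Units.coe_neg_one, hχ]

lemma odd_of_ne_one_mod_three [CommRing R] [NoZeroDivisors R] {χ : DirichletCharacter R 3}
    (hχ : χ ≠ 1) : χ.Odd := by
  refine χ.even_or_odd.resolve_left fun hχ_even ↦ hχ (MulChar.ext fun u ↦ ?_)
  have hunits : ∀ u : (ZMod 3)ˣ, u = 1 ∨ u = -1 := by decide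
  rw [MulChar.one_apply_coe]
  obtain rfl | rfl := hunits u
  · exact map_one χ
  · exact hχ_even

lemma inv_eq_self_mod_three [CommMonoidWithZero R] (χ : DirichletCharacter R 3) : χ⁻¹ = χ := by
  have hunits : ∀ u : (ZMod 3)ˣ, u⁻¹ = u := by decide
  ext u
  rw [MulChar.inv_apply, Ring.inverse_unit, hunits]

end Characters

lemma differentiableAt_Gammaℝ {s : ℂ} (hs : Gammaℝ s ≠ 0) : DifferentiableAt ℂ Gammaℝ s := by
  simpa only [inv_inv] using (Complex.differentiable_Gammaℝ_inv s).fun_inv (inv_ne_zero hs)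

lemma logDeriv_const_cpow {c : ℂ} (hc : c ≠ 0) {f : ℂ → ℂ} {s : ℂ} (hf : DifferentiableAt ℂ f s) :
    logDeriv (fun z ↦ c ^ f z) s = Complex.log c * deriv f s := by
  have hpow : c ^ f s ≠ 0 := by simp [Complex.cpow_eq_zero_iff, hc]
  rw [logDeriv_apply, (hf.hasDerivAt.const_cpow (.inl hc)).deriv]
  field_simp

lemma logDeriv_Gammaℂ {s : ℂ} (hs : ∀ n : ℕ, s ≠ -n) :
    logDeriv Gammaℂ s = digamma s - Complex.log (2 * π) := by
  have htwo_pi : (2 * π : ℂ) ≠ 0 := by simp [pi_ne_zero]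
  have hpow : (2 * π : ℂ) ^ (-s) ≠ 0 := by simp [Complex.cpow_eq_zero_iff, htwo_pi]
  have hpow_diff : DifferentiableAt ℂ (fun z : ℂ ↦ (2 * π : ℂ) ^ (-z)) s :=
    differentiableAt_id.neg.const_cpow (.inl htwo_pi)
  calc logDeriv Gammaℂ s
      = logDeriv (fun z : ℂ ↦ 2 * (2 * π : ℂ) ^ (-z)) s + logDeriv Complex.Gamma s :=
        logDeriv_mul s (mul_ne_zero two_ne_zero hpow) (Complex.Gamma_ne_zero hs)
          (hpow_diff.const_mul 2) (Complex.differentiableAt_Gamma s hs)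
    _ = digamma s - Complex.log (2 * π) := by
        rw [logDeriv_const_mul _ _ two_ne_zero, logDeriv_const_cpow htwo_pi (by fun_prop),
          deriv_neg, ← Complex.digamma_def]
        ring

lemma logDeriv_Gammaℝ_add_logDeriv_Gammaℝ_add_one {s : ℂ} (hs : ∀ n : ℕ, s ≠ -n) :
    logDeriv Gammaℝ s + logDeriv Gammaℝ (s + 1) = digamma s - Complex.log (2 * π) := by
  have hs₀ : Gammaℝ s ≠ 0 := fun h ↦ by
    obtain ⟨n, hn⟩ := Complex.Gammaℝ_eq_zero_iff.mp h
    exact hs (2 * n) (by push_cast; exact hn)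
  have hs₁ : Gammaℝ (s + 1) ≠ 0 := fun h ↦ by
    obtain ⟨n, hn⟩ := Complex.Gammaℝ_eq_zero_iff.mp h
    exact hs (2 * n + 1) (by push_cast; linear_combination hn)
  rw [← logDeriv_Gammaℂ hs, ← funext Complex.Gammaℝ_mul_Gammaℝ_add_one,
    logDeriv_mul s hs₀ hs₁ (differentiableAt_Gammaℝ hs₀)
      (differentiableAt_comp_add_const.mpr (differentiableAt_Gammaℝ hs₁))]
  simp only [logDeriv_apply, deriv_comp_add_const]

lemma logDeriv_Gammaℝ_one_add_logDeriv_Gammaℝ_two :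
    logDeriv Gammaℝ 1 + logDeriv Gammaℝ 2 = -eulerMascheroniConstant - Complex.log (2 * π) := by
  have hone : ∀ n : ℕ, (1 : ℂ) ≠ -n := fun n h ↦
    Nat.cast_add_one_ne_zero (R := ℂ) n (by linear_combination h)
  rw [← Complex.digamma_one, ← logDeriv_Gammaℝ_add_logDeriv_Gammaℝ_add_one hone,
    one_add_one_eq_two]

section FunctionalEquation

variable {N : ℕ} [NeZero N] {χ : DirichletCharacter ℂ N} {s : ℂ}

lemma completedLFunction_one_sub_eq_zero_iff (hχ : χ.IsPrimitive) :
    completedLFunction χ (1 - s) = 0 ↔ completedLFunction χ⁻¹ s = 0 := by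
  refine ⟨fun h ↦ ?_, fun h ↦ by rw [hχ.completedLFunction_one_sub, h, mul_zero]⟩
  rw [← sub_sub_cancel 1 s, (isPrimitive_inv hχ).completedLFunction_one_sub, inv_inv, h, mul_zero]

lemma logDeriv_completedLFunction_one_sub (hχ : χ.IsPrimitive) (hχ_one : χ ≠ 1)
    (hs : completedLFunction χ⁻¹ s ≠ 0) :
    logDeriv (completedLFunction χ) (1 - s) =
      -Complex.log N - logDeriv (completedLFunction χ⁻¹) s := by
  have hN : (N : ℂ) ≠ 0 := NeZero.ne _
  have hfactor : (N : ℂ) ^ (s - 1 / 2) * rootNumber χ ≠ 0 := by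
    refine left_ne_zero_of_mul (b := completedLFunction χ⁻¹ s) ?_
    rw [← hχ.completedLFunction_one_sub]
    exact (completedLFunction_one_sub_eq_zero_iff hχ).not.mpr hs
  have hpow_diff : DifferentiableAt ℂ (fun z : ℂ ↦ (N : ℂ) ^ (z - 1 / 2)) s :=
    (differentiableAt_id.sub_const _).const_cpow (.inl hN)
  have hreflect : logDeriv (fun z ↦ completedLFunction χ (1 - z)) s =
      -logDeriv (completedLFunction χ) (1 - s) := by
    simp only [logDeriv_apply, deriv_comp_const_sub, neg_div]
  have hproduct : logDeriv (fun z ↦ completedLFunction χ (1 - z)) s =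
      Complex.log N + logDeriv (completedLFunction χ⁻¹) s := by
    rw [funext hχ.completedLFunction_one_sub, logDeriv_mul s hfactor hs
        (hpow_diff.mul_const _) (differentiable_completedLFunction (inv_ne_one.mpr hχ_one) s),
      logDeriv_mul_const _ _ (right_ne_zero_of_mul hfactor),
      logDeriv_const_cpow hN (by fun_prop), deriv_sub_const, deriv_id'', mul_one]
  linear_combination hreflect - hproduct

lemma LFunction_eq_completed_div_Gammaℝ_of_odd (hχ : χ.Odd) (s : ℂ) :
    LFunction χ s = completedLFunction χ s / Gammaℝ (s + 1) :=
  ZMod.LFunction_eq_completed_div_gammaFactor_odd hχ.to_fun s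

lemma LFunction_eq_zero_iff_of_odd (hχ : χ.Odd) (hΓ : Gammaℝ (s + 1) ≠ 0) :
    LFunction χ s = 0 ↔ completedLFunction χ s = 0 := by
  rw [LFunction_eq_completed_div_Gammaℝ_of_odd hχ, div_eq_zero_iff, or_iff_left hΓ]

lemma logDeriv_LFunction_of_odd (hχ : χ.Odd) (hΓ : Gammaℝ (s + 1) ≠ 0)
    (hΛ : completedLFunction χ s ≠ 0) :
    logDeriv (LFunction χ) s =
      logDeriv (completedLFunction χ) s - logDeriv Gammaℝ (s + 1) := by
  rw [funext (LFunction_eq_completed_div_Gammaℝ_of_odd hχ), logDeriv_div s hΛ hΓ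
    (differentiable_completedLFunction (ne_one_of_odd hχ) s)
    (differentiableAt_comp_add_const.mpr (differentiableAt_Gammaℝ hΓ))]
  simp only [logDeriv_apply, deriv_comp_add_const]

lemma LFunction_one_sub_eq_zero_iff_of_odd (hχ : χ.IsPrimitive) (hχ_odd : χ.Odd)
    (hΓ : Gammaℝ (s + 1) ≠ 0) (hΓ' : Gammaℝ (1 - s + 1) ≠ 0) :
    LFunction χ (1 - s) = 0 ↔ LFunction χ⁻¹ s = 0 := by
  rw [LFunction_eq_zero_iff_of_odd hχ_odd hΓ', LFunction_eq_zero_iff_of_odd (odd_inv hχ_odd) hΓ,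
    completedLFunction_one_sub_eq_zero_iff hχ]

lemma logDeriv_LFunction_one_sub_of_odd (hχ : χ.IsPrimitive) (hχ_odd : χ.Odd)
    (hΓ : Gammaℝ (s + 1) ≠ 0) (hΓ' : Gammaℝ (1 - s + 1) ≠ 0) (hL : LFunction χ⁻¹ s ≠ 0) :
    logDeriv (LFunction χ) (1 - s) =
      -Complex.log N - (logDeriv Gammaℝ (s + 1) + logDeriv Gammaℝ (1 - s + 1)) -
        logDeriv (LFunction χ⁻¹) s := by
  have hΛ : completedLFunction χ⁻¹ s ≠ 0 :=
    (LFunction_eq_zero_iff_of_odd (odd_inv hχ_odd) hΓ).not.mp hL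
  rw [logDeriv_LFunction_of_odd (odd_inv hχ_odd) hΓ hΛ, logDeriv_LFunction_of_odd hχ_odd hΓ'
      ((completedLFunction_one_sub_eq_zero_iff hχ).not.mpr hΛ),
    logDeriv_completedLFunction_one_sub hχ (ne_one_of_odd hχ_odd) hΛ]
  ring

end FunctionalEquation

theorem stmt_19_general {N : ℕ} [NeZero N] {χ : DirichletCharacter ℂ N} (hχ : χ.IsPrimitive)
    (hχ_odd : χ.Odd) :
    LFunction χ 0 ≠ 0 ∧
      deriv (LFunction χ) 0 / LFunction χ 0 =
        (Real.log (2 * Real.pi / N) : ℂ) + (Real.eulerMascheroniConstant : ℂ) -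
          deriv (LFunction χ⁻¹) 1 / LFunction χ⁻¹ 1 := by
  have hL : LFunction χ⁻¹ 1 ≠ 0 :=
    LFunction_apply_one_ne_zero (inv_ne_one.mpr (ne_one_of_odd hχ_odd))
  have hΓ₂ : Gammaℝ (1 + 1) ≠ 0 := Complex.Gammaℝ_ne_zero_of_re_pos (by norm_num)
  have hΓ₁ : Gammaℝ (1 - 1 + 1) ≠ 0 := Complex.Gammaℝ_ne_zero_of_re_pos (by norm_num)
  have hL₀ : LFunction χ 0 ≠ 0 := by
    simpa only [sub_self] using
      (LFunction_one_sub_eq_zero_iff_of_odd hχ hχ_odd hΓ₂ hΓ₁).not.mpr hL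
  have hfe : logDeriv (LFunction χ) 0 = -Complex.log N -
      (logDeriv Gammaℝ 2 + logDeriv Gammaℝ 1) - logDeriv (LFunction χ⁻¹) 1 := by
    simpa only [sub_self, zero_add, one_add_one_eq_two] using
      logDeriv_LFunction_one_sub_of_odd hχ hχ_odd hΓ₂ hΓ₁ hL
  have hlog : (Real.log (2 * π / N) : ℂ) = Complex.log (2 * π) - Complex.log N := by
    rw [Real.log_div two_pi_pos.ne' (NeZero.ne _), Complex.ofReal_sub,
      Complex.ofReal_log two_pi_pos.le, ← Complex.natCast_log, Complex.ofReal_mul,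
      Complex.ofReal_ofNat]
  refine ⟨hL₀, ?_⟩
  rw [← logDeriv_apply, ← logDeriv_apply, hfe, hlog]
  linear_combination -logDeriv_Gammaℝ_one_add_logDeriv_Gammaℝ_two

/-- For the unique nontrivial Dirichlet character `χ` mod 3, one has `L(0, χ) ≠ 0` and
`L′(0, χ)/L(0, χ) = log(2π/3) + γ − L′(1, χ)/L(1, χ)`, where `γ` is the
Euler–Mascheroni constant. -/
theorem stmt_19 (χ : DirichletCharacter ℂ 3) (hχ : χ ≠ 1) :
    LFunction χ 0 ≠ 0 ∧
      deriv (LFunction χ) 0 / LFunction χ 0 =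
        (Real.log (2 * Real.pi / 3) : ℂ) + (Real.eulerMascheroniConstant : ℂ) -
          deriv (LFunction χ) 1 / LFunction χ 1 := by
  simpa only [inv_eq_self_mod_three, Nat.cast_ofNat] using
    stmt_19_general (isPrimitive_of_prime_of_ne_one hχ) (odd_of_ne_one_mod_three hχ)
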